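/- Let f be holomorphic on a polyannulus \mathcal{P} = \{z \in \mathbb{C}^n : r_j < |z_j| < R_j \text{ or } |z_j| < R_j\} with all derivatives D^\alpha f (\alpha \in \mathbb{N}^n, \max_j \alpha_j \le 2) bounded, and let c_\gamma be its Laurent coefficients. Define \mu_\ell = 1/(\ell(\ell-1)) for \ell \neq 0,1 and \mu_\ell = 1 for \ell \in \{0,1\}. Then for every \alpha \in \mathbb{Z}^n and all z \in \mathcal{P}, |c_\alpha z^\alpha| \le (\prod_{j=1}^n \mu_{\alpha_j}) \cdot (\prod_{j=1}^n (1 + R_j^2)) \cdot \sup\{|D^\beta f(w)| : w \in \mathcal{P}, \max_j \beta_j \le 2\}. -/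

import Mathlib

open Filter Topology

/-- The holomorphic partial derivative in the `j`-th coordinate direction. -/
noncomputable def pderivC {n : ℕ} (j : Fin n) (f : (Fin n → ℂ) → ℂ) : (Fin n → ℂ) → ℂ :=
  fun z => fderiv ℂ f z (Pi.single j 1)

/-- The iterated holomorphic partial derivative `D^α f` of multi-order `α`. -/
noncomputable def Dmulti {n : ℕ} (α : Fin n → ℕ) (f : (Fin n → ℂ) → ℂ) : (Fin n → ℂ) → ℂ :=
  (List.finRange n).foldr (fun j g => (pderivC j)^[α j] g) f

/-- `Ω` is a Reinhardt set: invariant under unimodular rotations of the coordinates. -/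
def IsReinhardt {n : ℕ} (Ω : Set (Fin n → ℂ)) : Prop :=
  ∀ z ∈ Ω, ∀ lam : Fin n → ℂ, (∀ j, ‖lam j‖ = 1) → (fun j => lam j * z j) ∈ Ω

/-- The polyannulus determined by radii `r`, `R` and a choice, for each coordinate,
of annulus (`b j = true`) or disc (`b j = false`). -/
def polyann {n : ℕ} (r R : Fin n → ℝ) (b : Fin n → Bool) : Set (Fin n → ℂ) :=
  {z | ∀ j, if b j then r j < ‖z j‖ ∧ ‖z j‖ < R j else ‖z j‖ < R j}

/-- `f` is holomorphic on `Ω` and smooth up to the boundary: every iterated holomorphic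
derivative of `f` is holomorphic on `Ω` and extends continuously to the closure. -/
def AInfinity {n : ℕ} (Ω : Set (Fin n → ℂ)) (f : (Fin n → ℂ) → ℂ) : Prop :=
  DifferentiableOn ℂ f Ω ∧
    ∀ α : Fin n → ℕ, DifferentiableOn ℂ (Dmulti α f) Ω ∧
      ∃ g : (Fin n → ℂ) → ℂ, ContinuousOn g (closure Ω) ∧ Set.EqOn (Dmulti α f) g Ω

/-- The sup-seminorm `‖f‖_{k,Ω}` over derivatives of total order at most `k`. -/
noncomputable def snormTotal {n : ℕ} (k : ℕ) (Ω : Set (Fin n → ℂ))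
    (f : (Fin n → ℂ) → ℂ) : ℝ :=
  sSup {x | ∃ α : Fin n → ℕ, ∃ z ∈ Ω, (∑ j, α j) ≤ k ∧ x = ‖Dmulti α f z‖}

/-- The sup-seminorm `‖f‖'_{k,Ω}` over derivatives of order at most `k` in each variable. -/
noncomputable def snormMax {n : ℕ} (k : ℕ) (Ω : Set (Fin n → ℂ))
    (f : (Fin n → ℂ) → ℂ) : ℝ :=
  sSup {x | ∃ α : Fin n → ℕ, ∃ z ∈ Ω, (∀ j, α j ≤ k) ∧ x = ‖Dmulti α f z‖}

/-- `μ_ℓ`: `1/(ℓ(ℓ-1))` for `ℓ ≠ 0,1` and `1` for `ℓ ∈ {0,1}`. -/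
noncomputable def mu (l : ℤ) : ℝ :=
  if l = 0 ∨ l = 1 then 1 else 1 / ((l : ℝ) * ((l : ℝ) - 1))

/-!
Differentiating the Laurent series termwise, `D^β f` has again a Laurent series, whose coefficient
at `α - β` is `c_α ∏ⱼ αⱼ (αⱼ - 1) ⋯ (αⱼ - βⱼ + 1)`; integrating it over the torus through `z` bounds
each of its terms at `z` by `sup |D^β f|`. Now take `βⱼ = 2`, except for `βⱼ = 0` where
`αⱼ ∈ {0, 1}`, so that no factor vanishes. What is lost is the factor `|zⱼ|^βⱼ ≤ 1 + Rⱼ²`, and what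
is gained is `1 / (αⱼ (αⱼ - 1))`. A point with vanishing coordinates is first moved off the
coordinate hyperplanes; as negative powers of `0` are `0`, this cannot decrease `|c_α z^α|`.
-/

open Metric MeasureTheory UnitAddTorus

section FourierCoefficients

-- `mFourierCoeff` is defined with these instances, which are local to its file in Mathlib.
attribute [local instance] instMeasureSpaceUnitAddCircle
  instIsProbabilityMeasureUnitAddCircleVolume

variable {d : Type*} [Fintype d] {b : (d → ℤ) → ℂ} {f : UnitAddTorus d → ℂ} {M : ℝ}

lemma norm_mFourier_apply (γ : d → ℤ) (t : UnitAddTorus d) : ‖mFourier γ t‖ = 1 := by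
  simp only [mFourier, fourier_apply, ContinuousMap.coe_mk, norm_prod, Circle.norm_coe,
    Finset.prod_const_one]

lemma mFourierCoeff_mFourier (γ α : d → ℤ) :
    mFourierCoeff (mFourier γ) α = if α = γ then 1 else 0 := by
  rw [← orthonormal_iff_ite.mp orthonormal_mFourier α γ, ContinuousMap.inner_toLp]
  simp only [mFourierCoeff, mFourier_neg, smul_eq_mul, mul_comm]

lemma norm_mFourierCoeff_le (hf : ∀ t, ‖f t‖ ≤ M) (α : d → ℤ) : ‖mFourierCoeff f α‖ ≤ M := by
  have hbound (t : UnitAddTorus d) : ‖mFourier (-α) t • f t‖ ≤ M := by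
    rw [norm_smul, norm_mFourier_apply, one_mul]
    exact hf t
  simpa [mFourierCoeff] using norm_integral_le_of_norm_le_const (μ := volume) (.of_forall hbound)

lemma mFourierCoeff_eq_of_hasSum (hf : ∀ t, HasSum (fun γ => b γ * mFourier γ t) (f t))
    (α : d → ℤ) : mFourierCoeff f α = b α := by
  classical
  have hnorm (γ : d → ℤ) (t : UnitAddTorus d) :
      ‖mFourier (-α) t • (b γ * mFourier γ t)‖ = ‖b γ‖ := by
    simp only [norm_smul, norm_mul, norm_mFourier_apply, one_mul, mul_one]
  have hb : Summable fun γ => ‖b γ‖ := by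
    simpa [norm_mFourier_apply] using (hf 0).summable.norm
  have hint (γ : d → ℤ) : Integrable fun t => mFourier (-α) t • (b γ * mFourier γ t) :=
    .of_bound (by fun_prop) ‖b γ‖ (.of_forall fun t => (hnorm γ t).le)
  have hterm (γ : d → ℤ) :
      ∫ t, mFourier (-α) t • (b γ * mFourier γ t) = if γ = α then b α else 0 := by
    simp only [smul_eq_mul, mul_left_comm _ (b γ), integral_const_mul]
    rw [show ∫ t, mFourier (-α) t * mFourier γ t = if α = γ then 1 else 0 from
      mFourierCoeff_mFourier γ α]
    grind
  have hsum := hasSum_integral_of_summable_integral_norm hint (by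
    simpa only [hnorm, integral_const, probReal_univ, one_smul] using hb)
  simp only [hterm, tsum_const_smul'', (hf _).tsum_eq] at hsum
  exact hsum.unique (hasSum_ite_eq α (b α))

end FourierCoefficients

section TermwiseDifferentiation

lemma norm_fderiv_le_of_forall_mem_ball {E F : Type*} [NormedAddCommGroup E] [NormedSpace ℂ E]
    [NormedAddCommGroup F] [NormedSpace ℂ F] {f : E → F} {x : E} {r C : ℝ} (hr : 0 < r)
    (hd : DifferentiableOn ℂ f (ball x r)) (hC : ∀ y ∈ ball x r, ‖f y‖ ≤ C) :
    ‖fderiv ℂ f x‖ ≤ 2 * C / r := by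
  refine Complex.norm_fderiv_le_div_of_mapsTo_ball hd (fun y hy => ?_) hr
  rw [mem_closedBall, dist_eq_norm, two_mul]
  exact (norm_sub_le _ _).trans (add_le_add (hC y hy) (hC x (mem_ball_self hr)))

lemma hasFDerivAt_of_eventually_norm_le_summable {κ E F : Type*}
    [NormedAddCommGroup E] [NormedSpace ℂ E] [NormedAddCommGroup F] [NormedSpace ℂ F]
    [CompleteSpace F] {f : κ → E → F} {g : E → F} {u : κ → ℝ} {x : E} (hu : Summable u)
    (hd : ∀ᶠ y in 𝓝 x, ∀ k, DifferentiableAt ℂ (f k) y)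
    (hle : ∀ᶠ y in 𝓝 x, ∀ k, ‖f k y‖ ≤ u k)
    (hg : ∀ᶠ y in 𝓝 x, HasSum (fun k => f k y) (g y)) :
    ∃ g' : E →L[ℂ] F, HasFDerivAt g g' x ∧ HasSum (fun k => fderiv ℂ (f k) x) g' := by
  obtain ⟨r, hr, hball⟩ := eventually_nhds_iff_ball.mp (hd.and hle)
  have hx : x ∈ ball x (r / 2) := mem_ball_self (half_pos hr)
  have hfderiv (k : κ) (y : E) (hy : y ∈ ball x (r / 2)) :
      ‖fderiv ℂ (f k) y‖ ≤ 2 * u k / (r / 2) := by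
    have hsub : ball y (r / 2) ⊆ ball x r := ball_subset (by rw [mem_ball] at hy; linarith)
    exact norm_fderiv_le_of_forall_mem_ball (half_pos hr)
      (fun w hw => ((hball w (hsub hw)).1 k).differentiableWithinAt)
      fun w hw => (hball w (hsub hw)).2 k
  have hu' : Summable fun k => 2 * u k / (r / 2) := (hu.mul_left 2).div_const _
  have hderiv := hasFDerivAt_tsum_of_isPreconnected hu' isOpen_ball
    (convex_ball x (r / 2)).isPreconnected
    (fun k y hy => ((hball y (ball_subset_ball (half_le_self hr.le) hy)).1 k).hasFDerivAt)
    hfderiv hx hg.self_of_nhds.summable hx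
  refine ⟨_, hderiv.congr_of_eventuallyEq (hg.mono fun y hy => hy.tsum_eq.symm),
    (Summable.of_norm_bounded hu' fun k => hfderiv k x hx).hasSum⟩

end TermwiseDifferentiation

section Monomials

variable {n : ℕ}

lemma differentiableAt_prod_zpow {z : Fin n → ℂ} (hz : ∀ j, z j ≠ 0) (γ : Fin n → ℤ) :
    DifferentiableAt ℂ (fun w : Fin n → ℂ => ∏ j, w j ^ γ j) z := by
  fun_prop (disch := simp [hz])

lemma pderivC_prod_zpow {z : Fin n → ℂ} (hz : ∀ j, z j ≠ 0) (i : Fin n) (γ : Fin n → ℤ) :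
    pderivC i (fun w => ∏ j, w j ^ γ j) z = γ i * ∏ j, z j ^ (γ - Pi.single i 1 : Fin n → ℤ) j := by
  have hline (ζ : ℂ) : ∏ j, Function.update z i ζ j ^ γ j =
      ζ ^ γ i * ∏ j ∈ Finset.univ.erase i, z j ^ γ j := by
    rw [← Finset.mul_prod_erase _ _ (Finset.mem_univ i), Function.update_self]
    congr 1
    exact Finset.prod_congr rfl fun j hj => by
      rw [Function.update_of_ne (Finset.ne_of_mem_erase hj)]
  have hshift : ∏ j, z j ^ (γ - Pi.single i 1 : Fin n → ℤ) j =
      z i ^ (γ i - 1) * ∏ j ∈ Finset.univ.erase i, z j ^ γ j := by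
    rw [← Finset.mul_prod_erase _ _ (Finset.mem_univ i), Pi.sub_apply, Pi.single_eq_same]
    congr 1
    exact Finset.prod_congr rfl fun j hj => by
      rw [Pi.sub_apply, Pi.single_eq_of_ne (Finset.ne_of_mem_erase hj), sub_zero]
  have hderiv : HasDerivAt ((fun w : Fin n → ℂ => ∏ j, w j ^ γ j) ∘ Function.update z i)
      (pderivC i (fun w => ∏ j, w j ^ γ j) z) (z i) := by
    refine HasFDerivAt.comp_hasDerivAt (z i) ?_ (hasDerivAt_update z i (z i))
    rw [Function.update_eq_self]
    exact (differentiableAt_prod_zpow hz γ).hasFDerivAt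
  rw [← hderiv.deriv]
  simp only [Function.comp_def, hline, deriv_mul_const_field, deriv_zpow, hshift, mul_assoc]

lemma zpow_le_zpow_add_zpow {K : Type*} [Field K] [LinearOrder K] [IsStrictOrderedRing K]
    {a b x : K} (ha : 0 < a) (hax : a ≤ x) (hxb : x ≤ b) (k : ℤ) : x ^ k ≤ a ^ k + b ^ k := by
  have hx : 0 < x := ha.trans_le hax
  rcases le_total 0 k with hk | hk
  · exact (zpow_le_zpow_left₀ hk hx.le hxb).trans (le_add_of_nonneg_left (zpow_pos ha k).le)
  · have hneg : x ^ k ≤ a ^ k := by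
      simpa only [zpow_neg, inv_inv] using
        inv_anti₀ (zpow_pos ha _) (zpow_le_zpow_left₀ (neg_nonneg.mpr hk) ha.le hax)
    exact hneg.trans (le_add_of_nonneg_right (zpow_pos (hx.trans_le hxb) k).le)

lemma prod_zpow_le_sum_prod_zpow {ι K : Type*} [Fintype ι] [DecidableEq ι] [Field K]
    [LinearOrder K] [IsStrictOrderedRing K] {x : ι → K} {y : ι → Bool → K}
    (hy : ∀ j, 0 < y j false) (hyx : ∀ j, y j false ≤ x j) (hxy : ∀ j, x j ≤ y j true)
    (γ : ι → ℤ) : ∏ j, x j ^ γ j ≤ ∑ σ : ι → Bool, ∏ j, y j (σ j) ^ γ j := by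
  calc ∏ j, x j ^ γ j
      ≤ ∏ j, ∑ s : Bool, y j s ^ γ j := by
        refine Finset.prod_le_prod
          (fun j _ => zpow_nonneg ((hy j).le.trans (hyx j)) _) fun j _ => ?_
        rw [Fintype.sum_bool, add_comm]
        exact zpow_le_zpow_add_zpow (hy j) (hyx j) (hxy j) _
    _ = ∑ σ : ι → Bool, ∏ j, y j (σ j) ^ γ j := by
        rw [Finset.prod_univ_sum, Fintype.piFinset_univ]

end Monomials

/-- The function `g` is, on `Ω`, the sum of the Laurent series `∑ a_γ z^γ`. As always for `HasSum`
in `ℂ`, convergence is absolute; negative powers of a vanishing coordinate are `0`. -/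
def HasLaurentSeriesOn {n : ℕ} (a : (Fin n → ℤ) → ℂ) (g : (Fin n → ℂ) → ℂ)
    (Ω : Set (Fin n → ℂ)) : Prop :=
  ∀ z ∈ Ω, HasSum (fun γ => a γ * ∏ j, z j ^ γ j) (g z)

/-- The Laurent coefficients of `∂g/∂zᵢ`, in terms of the Laurent coefficients `a` of `g`. -/
def laurentDeriv {n : ℕ} (i : Fin n) (a : (Fin n → ℤ) → ℂ) : (Fin n → ℤ) → ℂ :=
  fun γ => (γ i + 1) * a (γ + Pi.single i 1)

/-- The Laurent coefficients of `D^β g`, in terms of the Laurent coefficients `a` of `g`. -/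
def laurentDmulti {n : ℕ} (β : Fin n → ℕ) (a : (Fin n → ℤ) → ℂ) : (Fin n → ℤ) → ℂ :=
  (List.finRange n).foldr (fun j a' => (laurentDeriv j)^[β j] a') a

section LaurentCoefficients

variable {n : ℕ}

lemma iterate_laurentDeriv_apply (i : Fin n) (k : ℕ) (a : (Fin n → ℤ) → ℂ) (γ : Fin n → ℤ) :
    (laurentDeriv i)^[k] a γ =
      (ascPochhammer ℂ k).eval (γ i + 1 : ℂ) * a (γ + Pi.single i (k : ℤ)) := by
  induction k generalizing γ with
  | zero => simp
  | succ k ih =>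
    rw [Function.iterate_succ_apply', laurentDeriv, ih, add_assoc, ← Pi.single_add,
      ascPochhammer_succ_left]
    simp [add_comm (1 : ℤ), mul_assoc]

lemma foldr_iterate_laurentDeriv_apply (β : Fin n → ℕ) (a : (Fin n → ℤ) → ℂ)
    {L : List (Fin n)} (hL : L.Nodup) (γ : Fin n → ℤ) :
    L.foldr (fun j a' => (laurentDeriv j)^[β j] a') a γ =
      (L.map fun j => (ascPochhammer ℂ (β j)).eval (γ j + 1 : ℂ)).prod *
        a (γ + (L.map fun j => Pi.single j (β j : ℤ)).sum) := by
  induction L generalizing γ with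
  | nil => simp
  | cons i L ih =>
    obtain ⟨hi, hL⟩ := List.nodup_cons.mp hL
    have hunchanged : ∀ j ∈ L, (γ + Pi.single i (β i : ℤ) : Fin n → ℤ) j = γ j := fun j hj => by
      rw [Pi.add_apply, Pi.single_eq_of_ne (ne_of_mem_of_not_mem hj hi), add_zero]
    rw [List.foldr_cons, iterate_laurentDeriv_apply, ih hL, List.map_cons, List.prod_cons,
      List.map_cons, List.sum_cons, add_assoc, mul_assoc]
    congr 3
    exact List.map_congr_left fun j hj => by rw [hunchanged j hj]

lemma laurentDmulti_apply (β : Fin n → ℕ) (a : (Fin n → ℤ) → ℂ) (γ : Fin n → ℤ) :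
    laurentDmulti β a γ = (∏ j, (ascPochhammer ℂ (β j)).eval (γ j + 1 : ℂ)) *
      a (fun j => γ j + β j) := by
  rw [laurentDmulti, foldr_iterate_laurentDeriv_apply β a (List.nodup_finRange n),
    ← Fin.prod_univ_def, ← Fin.sum_univ_def, Finset.univ_sum_single]
  rfl

end LaurentCoefficients

section LaurentSeries

variable {n : ℕ} {a : (Fin n → ℤ) → ℂ} {g : (Fin n → ℂ) → ℂ} {Ω : Set (Fin n → ℂ)}

lemma HasLaurentSeriesOn.exists_summable_eventually_norm_le (h : HasLaurentSeriesOn a g Ω)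
    (hΩ : IsOpen Ω) {z : Fin n → ℂ} (hz : z ∈ Ω) (hz0 : ∀ j, z j ≠ 0) :
    ∃ u : (Fin n → ℤ) → ℝ, Summable u ∧ ∀ᶠ w in 𝓝 z, ∀ γ, ‖a γ * ∏ j, w j ^ γ j‖ ≤ u γ := by
  -- The `2ⁿ` corners of a small box around the moduli of `z`, on the rays through the `zⱼ`.
  let corner (s : ℝ) (σ : Fin n → Bool) (j : Fin n) : ℂ := ((bif σ j then s else s⁻¹ : ℝ) : ℂ) * z j
  have hcorner : ∀ᶠ s : ℝ in 𝓝 1, ∀ σ, corner s σ ∈ Ω := by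
    refine eventually_all.mpr fun σ => ?_
    have hcont : ContinuousAt (fun s => corner s σ) 1 := by
      refine continuousAt_pi.mpr fun j => ?_
      cases hσ : σ j <;> simp only [corner, hσ, cond_true, cond_false] <;> fun_prop (disch := simp)
    refine hcont.eventually_mem (hΩ.mem_nhds ?_)
    convert hz using 1
    ext j
    cases hσ : σ j <;> simp [corner, hσ]
  obtain ⟨s, hsΩ, hs⟩ : ∃ s, (∀ σ, corner s σ ∈ Ω) ∧ 1 < s :=
    ((hcorner.filter_mono nhdsWithin_le_nhds).and self_mem_nhdsWithin).exists (f := 𝓝[>] (1 : ℝ))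
  have hs0 : 0 < s := one_pos.trans hs
  have hzpos (j : Fin n) : 0 < ‖z j‖ := norm_pos_iff.mpr (hz0 j)
  refine ⟨fun γ => ∑ σ, ‖a γ * ∏ j, corner s σ j ^ γ j‖,
    summable_sum fun σ _ => (h _ (hsΩ σ)).summable.norm, ?_⟩
  have hbox : ∀ᶠ w : Fin n → ℂ in 𝓝 z, ∀ j, s⁻¹ * ‖z j‖ ≤ ‖w j‖ ∧ ‖w j‖ ≤ s * ‖z j‖ := by
    refine eventually_all.mpr fun j => ?_
    have hcont : Tendsto (fun w : Fin n → ℂ => ‖w j‖) (𝓝 z) (𝓝 ‖z j‖) :=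
      Continuous.tendsto (by fun_prop) z
    have hlower : s⁻¹ * ‖z j‖ < ‖z j‖ :=
      mul_lt_of_lt_one_left (hzpos j) (inv_lt_one_of_one_lt₀ hs)
    have hupper : ‖z j‖ < s * ‖z j‖ := lt_mul_of_one_lt_left (hzpos j) hs
    exact (hcont.eventually_const_le hlower).and (hcont.eventually_le_const hupper)
  filter_upwards [hbox] with w hw γ
  simp only [norm_mul, norm_prod, norm_zpow, ← Finset.mul_sum]
  refine mul_le_mul_of_nonneg_left ?_ (norm_nonneg _)
  convert prod_zpow_le_sum_prod_zpow (y := fun j t => (bif t then s else s⁻¹) * ‖z j‖)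
    (fun j => mul_pos (inv_pos.mpr hs0) (hzpos j)) (fun j => (hw j).1) (fun j => (hw j).2) γ
    using 5 with σ _ j
  cases hσ : σ j <;> simp [corner, hσ, abs_of_pos hs0]

lemma HasLaurentSeriesOn.pderivC (h : HasLaurentSeriesOn a g Ω) (hΩ : IsOpen Ω)
    (hΩ0 : ∀ z ∈ Ω, ∀ j, z j ≠ 0) (i : Fin n) :
    HasLaurentSeriesOn (laurentDeriv i a) (pderivC i g) Ω := by
  intro z hz
  obtain ⟨u, hu, hle⟩ := h.exists_summable_eventually_norm_le hΩ hz (hΩ0 z hz)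
  have hmem : ∀ᶠ w in 𝓝 z, w ∈ Ω := hΩ.mem_nhds hz
  obtain ⟨g', hg, hsum⟩ := hasFDerivAt_of_eventually_norm_le_summable hu
    (hmem.mono fun w hw γ => (differentiableAt_prod_zpow (hΩ0 w hw) γ).const_mul (a γ)) hle
    (hmem.mono h)
  have hterm (γ : Fin n → ℤ) :
      fderiv ℂ (fun w : Fin n → ℂ => a γ * ∏ j, w j ^ γ j) z (Pi.single i 1) =
        a γ * (γ i * ∏ j, z j ^ (γ - Pi.single i 1 : Fin n → ℤ) j) := by
    rw [← pderivC_prod_zpow (hΩ0 z hz), fderiv_const_mul (differentiableAt_prod_zpow (hΩ0 z hz) γ)]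
    rfl
  have hpartial := hsum.mapL (ContinuousLinearMap.apply ℂ ℂ (Pi.single i 1 : Fin n → ℂ))
  simp only [ContinuousLinearMap.apply_apply, hterm, ← hg.fderiv] at hpartial
  refine ((Equiv.addRight (Pi.single i 1)).hasSum_iff.mpr hpartial).congr_fun fun γ => ?_
  simp only [laurentDeriv, Pi.sub_apply, Equiv.coe_addRight, Function.comp_apply, Pi.add_apply,
    Pi.single_eq_same, Int.cast_add, Int.cast_one, add_sub_cancel_right]
  ring

lemma HasLaurentSeriesOn.dmulti (h : HasLaurentSeriesOn a g Ω) (hΩ : IsOpen Ω)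
    (hΩ0 : ∀ z ∈ Ω, ∀ j, z j ≠ 0) (β : Fin n → ℕ) :
    HasLaurentSeriesOn (laurentDmulti β a) (Dmulti β g) Ω := by
  have hiterate (i : Fin n) (k : ℕ) {a' : (Fin n → ℤ) → ℂ} {g' : (Fin n → ℂ) → ℂ}
      (h' : HasLaurentSeriesOn a' g' Ω) :
      HasLaurentSeriesOn ((laurentDeriv i)^[k] a') ((_root_.pderivC i)^[k] g') Ω := by
    induction k with
    | zero => exact h'
    | succ k ih =>
      simp only [Function.iterate_succ_apply']
      exact ih.pderivC hΩ hΩ0 i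
  rw [laurentDmulti, Dmulti]
  induction List.finRange n with
  | nil => exact h
  | cons i L ih => exact hiterate i (β i) ih

lemma HasLaurentSeriesOn.norm_coeff_mul_prod_zpow_le (h : HasLaurentSeriesOn a g Ω)
    (hΩ : IsReinhardt Ω) {M : ℝ} (hM : ∀ w ∈ Ω, ‖g w‖ ≤ M) {z : Fin n → ℂ} (hz : z ∈ Ω)
    (α : Fin n → ℤ) : ‖a α * ∏ j, z j ^ α j‖ ≤ M := by
  let rotate (t : UnitAddTorus (Fin n)) (j : Fin n) : ℂ := AddCircle.toCircle (t j) * z j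
  have hrotate (t : UnitAddTorus (Fin n)) : rotate t ∈ Ω :=
    hΩ z hz _ fun j => Circle.norm_coe _
  have hseries (t : UnitAddTorus (Fin n)) :
      HasSum (fun γ => (a γ * ∏ j, z j ^ γ j) * mFourier γ t) (g (rotate t)) := by
    refine (h _ (hrotate t)).congr_fun fun γ => ?_
    simp only [rotate, mul_zpow, Finset.prod_mul_distrib, mFourier, fourier_apply,
      AddCircle.toCircle_zsmul, Circle.coe_zpow, ContinuousMap.coe_mk]
    ring
  rw [← mFourierCoeff_eq_of_hasSum hseries]
  exact norm_mFourierCoeff_le (fun t => hM _ (hrotate t)) α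

end LaurentSeries

/-- The order of differentiation that is used in a variable in which the exponent is `l`: the second
derivative, unless it annihilates `x ^ l`. -/
def estimateOrder (l : ℤ) : ℕ :=
  if l = 0 ∨ l = 1 then 0 else 2

section Weights

lemma estimateOrder_le_two (l : ℤ) : estimateOrder l ≤ 2 := by
  rw [estimateOrder]
  split_ifs <;> omega

lemma mu_nonneg (l : ℤ) : 0 ≤ mu l := by
  rw [mu]
  split_ifs with hl
  · exact zero_le_one
  · have : 0 ≤ l * (l - 1) := by
      rcases le_or_gt l 0 with h | h
      · exact mul_nonneg_of_nonpos_of_nonpos h (by omega)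
      · exact mul_nonneg h.le (by omega)
    exact one_div_nonneg.mpr (mod_cast this)

lemma norm_zpow_le_mu_mul {x : ℂ} {R : ℝ} (hx : x ≠ 0) (hR : ‖x‖ ≤ R) (l : ℤ) :
    ‖x ^ l‖ ≤ mu l * (1 + R ^ 2) *
      ‖(ascPochhammer ℂ (estimateOrder l)).eval ((l - estimateOrder l : ℤ) + 1 : ℂ) *
        x ^ (l - estimateOrder l)‖ := by
  have hmu := mu_nonneg l
  rw [mu, estimateOrder] at *
  split_ifs at hmu ⊢ with hl
  · simpa using le_mul_of_one_le_left (norm_nonneg (x ^ l)) (le_add_of_nonneg_right (sq_nonneg R))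
  · push Not at hl
    have hl0 : (l : ℝ) ≠ 0 := mod_cast hl.1
    have hl1 : (l : ℝ) - 1 ≠ 0 := sub_ne_zero.mpr (mod_cast hl.2)
    have hcoeff : ‖(ascPochhammer ℂ 2).eval ((l - 2 : ℤ) + 1 : ℂ)‖ = l * (l - 1) := by
      have heval : (ascPochhammer ℂ 2).eval ((l - 2 : ℤ) + 1 : ℂ) = ((l * (l - 1) : ℝ) : ℂ) := by
        simp only [Int.cast_sub, Int.cast_ofNat, ascPochhammer_succ_left, ascPochhammer_zero,
          Polynomial.one_comp, mul_one, Polynomial.X_comp, Polynomial.eval_mul, Polynomial.eval_X,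
          Polynomial.eval_add, Polynomial.eval_one, Complex.ofReal_mul, Complex.ofReal_intCast,
          Complex.ofReal_sub, Complex.ofReal_one]
        ring
      rw [heval, Complex.norm_real, Real.norm_of_nonneg (one_div_nonneg.mp hmu)]
    have hsq : ‖x‖ ^ 2 ≤ 1 + R ^ 2 :=
      (pow_le_pow_left₀ (norm_nonneg x) hR 2).trans (le_add_of_nonneg_left zero_le_one)
    calc ‖x ^ l‖ = ‖x ^ (l - 2)‖ * ‖x‖ ^ 2 := by
          rw [← norm_pow, ← norm_mul, ← zpow_natCast, ← zpow_add₀ hx]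
          simp
      _ ≤ ‖x ^ (l - 2)‖ * (1 + R ^ 2) := mul_le_mul_of_nonneg_left hsq (norm_nonneg _)
      _ = 1 / (l * (l - 1)) * (1 + R ^ 2) *
          ‖(ascPochhammer ℂ 2).eval ((l - 2 : ℤ) + 1 : ℂ) * x ^ (l - 2)‖ := by
        rw [norm_mul, hcoeff]
        field_simp

end Weights

section ReinhardtSets

variable {n : ℕ} {Ω : Set (Fin n → ℂ)}

lemma isOpen_setOf_forall_ne_zero : IsOpen {z : Fin n → ℂ | ∀ j, z j ≠ 0} := by
  simp only [Set.ofPred_forall]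
  exact isOpen_iInter_of_finite fun j => isOpen_ne_fun (continuous_apply j) continuous_const

lemma IsReinhardt.inter_setOf_forall_ne_zero (hΩ : IsReinhardt Ω) :
    IsReinhardt (Ω ∩ {z | ∀ j, z j ≠ 0}) := fun z hz lam hlam =>
  ⟨hΩ z hz.1 lam hlam, fun j =>
    mul_ne_zero (norm_ne_zero_iff.mp (by rw [hlam j]; exact one_ne_zero)) (hz.2 j)⟩

lemma exists_mem_forall_ne_zero_of_isOpen (hΩ : IsOpen Ω) {z : Fin n → ℂ} (hz : z ∈ Ω) :
    ∃ w ∈ Ω, ∀ j, w j ≠ 0 ∧ (z j ≠ 0 → w j = z j) := by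
  let fill (ε : ℂ) (j : Fin n) : ℂ := if z j = 0 then ε else z j
  have hcont : Continuous fill := by
    refine continuous_pi fun j => ?_
    simp only [fill]
    split_ifs <;> fun_prop
  have hfill : fill 0 = z := by
    ext j
    grind
  have hmem : ∀ᶠ ε in 𝓝 0, fill ε ∈ Ω :=
    hcont.continuousAt.eventually_mem (hΩ.mem_nhds (hfill ▸ hz))
  obtain ⟨ε, hε, hε0⟩ : ∃ ε, fill ε ∈ Ω ∧ ε ≠ 0 :=
    ((hmem.filter_mono nhdsWithin_le_nhds).and self_mem_nhdsWithin).exists (f := 𝓝[≠] (0 : ℂ))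
  exact ⟨fill ε, hε, by grind⟩

lemma isReinhardt_polyann (r R : Fin n → ℝ) (b : Fin n → Bool) : IsReinhardt (polyann r R b) := by
  intro z hz lam hlam j
  simpa only [norm_mul, hlam, one_mul] using hz j

lemma isOpen_polyann (r R : Fin n → ℝ) (b : Fin n → Bool) : IsOpen (polyann r R b) := by
  simp only [polyann, Set.ofPred_forall]
  refine isOpen_iInter_of_finite fun j => ?_
  have hnorm : Continuous fun z : Fin n → ℂ => ‖z j‖ := by fun_prop
  cases b j
  · simpa using isOpen_lt hnorm continuous_const
  · simpa [Set.ofPred_and] using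
      (isOpen_lt continuous_const hnorm).inter (isOpen_lt hnorm continuous_const)

lemma norm_le_of_mem_polyann {r R : Fin n → ℝ} {b : Fin n → Bool} {z : Fin n → ℂ}
    (hz : z ∈ polyann r R b) (j : Fin n) : ‖z j‖ ≤ R j := by
  have := hz j
  grind

end ReinhardtSets

lemma HasLaurentSeriesOn.norm_coeff_mul_prod_zpow_le_mu {n : ℕ} {Ω : Set (Fin n → ℂ)}
    {R : Fin n → ℝ} {f : (Fin n → ℂ) → ℂ} {c : (Fin n → ℤ) → ℂ} {M : ℝ}
    (hc : HasLaurentSeriesOn c f Ω) (hΩo : IsOpen Ω) (hΩ : IsReinhardt Ω)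
    (hΩ0 : ∀ z ∈ Ω, ∀ j, z j ≠ 0) (hR : ∀ z ∈ Ω, ∀ j, ‖z j‖ ≤ R j)
    (hM : ∀ β : Fin n → ℕ, (∀ j, β j ≤ 2) → ∀ w ∈ Ω, ‖Dmulti β f w‖ ≤ M)
    {z : Fin n → ℂ} (hz : z ∈ Ω) (α : Fin n → ℤ) :
    ‖c α * ∏ j, z j ^ α j‖ ≤ (∏ j, mu (α j)) * (∏ j, (1 + R j ^ 2)) * M := by
  let β (j : Fin n) : ℕ := estimateOrder (α j)
  let p (j : Fin n) : ℂ := (ascPochhammer ℂ (β j)).eval ((α j - β j : ℤ) + 1 : ℂ)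
  have hDβ : ‖c α‖ * ∏ j, ‖p j * z j ^ (α j - β j)‖ ≤ M := by
    have hterm := (hc.dmulti hΩo hΩ0 β).norm_coeff_mul_prod_zpow_le hΩ
      (hM β fun j => estimateOrder_le_two (α j)) hz fun j => α j - β j
    simp only [laurentDmulti_apply, sub_add_cancel] at hterm
    rwa [mul_comm (∏ j, _), mul_assoc, ← Finset.prod_mul_distrib, norm_mul, norm_prod] at hterm
  have hfactor : ∏ j, ‖z j ^ α j‖ ≤
      ∏ j, (mu (α j) * (1 + R j ^ 2) * ‖p j * z j ^ (α j - β j)‖) :=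
    Finset.prod_le_prod (fun j _ => norm_nonneg _) fun j _ =>
      norm_zpow_le_mu_mul (hΩ0 z hz j) (hR z hz j) (α j)
  have hweight : 0 ≤ (∏ j, mu (α j)) * ∏ j, (1 + R j ^ 2) :=
    mul_nonneg (Finset.prod_nonneg fun j _ => mu_nonneg (α j))
      (Finset.prod_nonneg fun j _ => by positivity)
  calc ‖c α * ∏ j, z j ^ α j‖
      = ‖c α‖ * ∏ j, ‖z j ^ α j‖ := by rw [norm_mul, norm_prod]
    _ ≤ ‖c α‖ * ∏ j, (mu (α j) * (1 + R j ^ 2) * ‖p j * z j ^ (α j - β j)‖) :=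
        mul_le_mul_of_nonneg_left hfactor (norm_nonneg _)
    _ = (∏ j, mu (α j)) * (∏ j, (1 + R j ^ 2)) *
        (‖c α‖ * ∏ j, ‖p j * z j ^ (α j - β j)‖) := by
      simp only [Finset.prod_mul_distrib]
      ring
    _ ≤ (∏ j, mu (α j)) * (∏ j, (1 + R j ^ 2)) * M := mul_le_mul_of_nonneg_left hDβ hweight

theorem stmt5_general {n : ℕ} {Ω : Set (Fin n → ℂ)} (hΩo : IsOpen Ω) (hΩ : IsReinhardt Ω)
    (R : Fin n → ℝ) (hR : ∀ z ∈ Ω, ∀ j, ‖z j‖ ≤ R j)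
    (f : (Fin n → ℂ) → ℂ) (c : (Fin n → ℤ) → ℂ)
    (hc : ∀ z ∈ Ω, HasSum (fun γ : Fin n → ℤ => c γ * ∏ j, z j ^ γ j) (f z))
    (M : ℝ)
    (hM : ∀ β : Fin n → ℕ, (∀ j, β j ≤ 2) → ∀ w ∈ Ω, ‖Dmulti β f w‖ ≤ M)
    (α : Fin n → ℤ) (z : Fin n → ℂ) (hz : z ∈ Ω) :
    ‖c α * ∏ j, z j ^ α j‖ ≤ (∏ j, mu (α j)) * (∏ j, (1 + R j ^ 2)) * M := by
  obtain ⟨w, hw, hw0⟩ := exists_mem_forall_ne_zero_of_isOpen hΩo hz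
  have hzw (j : Fin n) : ‖z j ^ α j‖ ≤ ‖w j ^ α j‖ := by
    rcases eq_or_ne (z j) 0 with hzj | hzj
    · rcases eq_or_ne (α j) 0 with hαj | hαj
      · simp [hαj]
      · rw [hzj, zero_zpow _ hαj, norm_zero]
        exact norm_nonneg _
    · rw [(hw0 j).2 hzj]
  have hseries : HasLaurentSeriesOn c f (Ω ∩ {w | ∀ j, w j ≠ 0}) := fun w hw => hc w hw.1
  calc ‖c α * ∏ j, z j ^ α j‖ ≤ ‖c α * ∏ j, w j ^ α j‖ := by
        simp only [norm_mul, norm_prod]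
        exact mul_le_mul_of_nonneg_left
          (Finset.prod_le_prod (fun j _ => norm_nonneg _) fun j _ => hzw j) (norm_nonneg _)
    _ ≤ (∏ j, mu (α j)) * (∏ j, (1 + R j ^ 2)) * M :=
        hseries.norm_coeff_mul_prod_zpow_le_mu (hΩo.inter isOpen_setOf_forall_ne_zero)
          hΩ.inter_setOf_forall_ne_zero (fun w hw => hw.2) (fun w hw => hR w hw.1)
          (fun β hβ w hw => hM β hβ w hw.1) ⟨hw, fun j => (hw0 j).1⟩ α

/-- Coefficient estimate on a polyannulus (case `k = 0` of the key proposition):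
`|c_α z^α| ≤ (∏ μ_{α_j}) (∏ (1+R_j²)) · sup{|D^β f| : max β_j ≤ 2}`. -/
theorem stmt5 {n : ℕ} (r R : Fin n → ℝ) (b : Fin n → Bool)
    (hrR : ∀ j, 0 < r j ∧ r j < R j)
    (f : (Fin n → ℂ) → ℂ) (hf : AInfinity (polyann r R b) f)
    (c : (Fin n → ℤ) → ℂ)
    (hc : ∀ z ∈ polyann r R b,
      HasSum (fun γ : Fin n → ℤ => c γ * ∏ j, z j ^ γ j) (f z))
    (M : ℝ)
    (hM : ∀ β : Fin n → ℕ, (∀ j, β j ≤ 2) →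
      ∀ w ∈ polyann r R b, ‖Dmulti β f w‖ ≤ M)
    (α : Fin n → ℤ) (z : Fin n → ℂ) (hz : z ∈ polyann r R b) :
    ‖c α * ∏ j, z j ^ α j‖ ≤ (∏ j, mu (α j)) * (∏ j, (1 + R j ^ 2)) * M := by
  exact stmt5_general (isOpen_polyann r R b) (isReinhardt_polyann r R b) R
    (fun _ => norm_le_of_mem_polyann) f c hc M hM α z hz
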